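/- arXiv:2504.11988 — 2 statements merged into one kernel-verified Lean document; each statement's English description precedes it below -/
import Mathlib

section
/- For every x ∈ (0, 1/2] and every a ∈ (0,1): 1 − (1−x)^a ≤ 2^{1−a} a x. -/
/-!
Since `t ↦ t ^ a` is concave, its tangent at `1 - x` lies above it at `1`, so
`1 - (1 - x) ^ a ≤ a * (1 - x) ^ (a - 1) * x`. As `1 - x ≥ 1 / 2` and `a - 1 < 0`, the factor
`(1 - x) ^ (a - 1)` is at most `2 ^ (1 - a)`. The tangent inequality is obtained from
Bernoulli's inequality `rpow_one_add_le_one_add_mul_self`.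
-/

open Set

noncomputable section

/-- For every `x ∈ (0, 1/2]` and `a ∈ (0,1)`: `1 − (1−x)^a ≤ 2^{1−a} a x`. -/
theorem stmt10 :
    ∀ x ∈ Ioc (0 : ℝ) (1 / 2), ∀ a ∈ Ioo (0 : ℝ) 1,
      1 - (1 - x) ^ a ≤ 2 ^ (1 - a) * a * x := by
  rintro x ⟨hx0, hx⟩ a ⟨ha0, ha1⟩
  have hy : 0 < 1 - x := by linarith
  have hya : 0 < (1 - x) ^ a := Real.rpow_pos_of_pos hy a
  -- Bernoulli at `1 + x / (1 - x) = (1 - x)⁻¹`; scaled by `(1 - x) ^ a`, this is the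
  -- tangent-line bound at `1 - x` for the concave function `t ↦ t ^ a`.
  have hB : (1 + x / (1 - x)) ^ a ≤ 1 + a * (x / (1 - x)) :=
    rpow_one_add_le_one_add_mul_self (by linarith [div_pos hx0 hy]) ha0.le ha1.le
  have hinv : 1 + x / (1 - x) = (1 - x)⁻¹ := by field_simp; ring
  rw [hinv, Real.inv_rpow hy.le, inv_le_iff_one_le_mul₀ hya] at hB
  -- The slope factor is at most its value at `1 - x = 1 / 2`, since `a - 1 < 0`.
  have hslope : (1 - x) ^ a / (1 - x) ≤ 2 ^ (1 - a) := by
    rw [← Real.rpow_sub_one hy.ne', ← neg_sub 1 a, Real.rpow_neg hy.le,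
      ← Real.inv_rpow hy.le]
    refine Real.rpow_le_rpow (inv_pos.2 hy).le ?_ (by linarith)
    rw [inv_le_comm₀ hy two_pos]
    linarith
  calc 1 - (1 - x) ^ a ≤ (1 - x) ^ a / (1 - x) * (a * x) := by
        have h : (1 + a * (x / (1 - x))) * (1 - x) ^ a
            = (1 - x) ^ a + (1 - x) ^ a / (1 - x) * (a * x) := by ring
        linarith
    _ ≤ 2 ^ (1 - a) * (a * x) := by gcongr
    _ = 2 ^ (1 - a) * a * x := by ring
end
end

section
/- Let ν⁺ be an atomless Borel measure on (0,∞) with N⁺(r) := ν⁺((r,∞)) < ∞ for every r > 0 and lim_{r↓0} N⁺(r) = +∞. Fix t, h > 0 and ε ∈ (0,1), set λ := t^{1−ε} h^{−ε}/(1−ε), and define F(x) := (1/λ) ∫_{(0,x]} min( h^{−1}(N⁺(u))^{−1/ε}, t ) ν⁺(du) for x > 0 (with the convention 0^{−1/ε} = +∞). Then: F(x) = (1/(th))^{1−ε} · ε · (N⁺(x))^{(ε−1)/ε} whenever N⁺(x) ≥ (th)^{−ε}, and F(x) = 1 − (1−ε)(th)^ε N⁺(x) whenever N⁺(x) < (th)^{−ε}.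 -/
/-!
For an atomless `ν` the tail function `N⁺` pushes `ν` on `(0, ∞)` forward to Lebesgue measure on
`(0, ∞)` (`map_Nplus`), because the sublevel set `{u > 0 | N⁺(u) ≤ b}` has measure exactly `b`
(`measure_Nplus_le`). Up to a null set, `u ≤ x` means `N⁺(u) ≥ N⁺(x)`, so the substitution
`s = N⁺(u)` turns the integral defining `F(x)` into `∫_{N⁺(x)}^∞ (h⁻¹ s^{-1/ε} ∧ t) ds`
(`lintegral_cut_eq`). The minimum switches at `s = (th)^{-ε}`: above it the integrand is a power
(`lintegral_cutDensity_tail`), below it the constant `t` (`lintegral_cutDensity_cut`).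
-/

open MeasureTheory Set Filter
open scoped ENNReal

noncomputable section

/-- Tail of the measure: `N⁺(r) = ν⁺((r,∞))`. -/
def Nplus (ν : Measure ℝ) (r : ℝ) : ℝ≥0∞ := ν (Ioi r)

/-- The distribution function of a single large jump:
`F(x) = (1/λ) ∫_{(0,x]} (h^{−1}(N⁺(u))^{−1/ε} ∧ t) ν⁺(du)` with
`λ = t^{1−ε} h^{−ε}/(1−ε)` (the `ℝ≥0∞`-rpow convention gives `0^{−1/ε} = +∞`). -/
def jumpCDF (ν : Measure ℝ) (t h ε : ℝ) (x : ℝ) : ℝ≥0∞ :=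
  (ENNReal.ofReal (t ^ (1 - ε) * h ^ (-ε) / (1 - ε)))⁻¹ *
    ∫⁻ u in Ioc (0 : ℝ) x,
      min (ENNReal.ofReal (1 / h) * (Nplus ν u) ^ (-(1 / ε))) (ENNReal.ofReal t) ∂ν

theorem Nplus_antitone (ν : Measure ℝ) : Antitone (Nplus ν) :=
  fun _ _ hab => measure_mono (Ioi_subset_Ioi hab)

theorem exists_Nplus_le (ν : Measure ℝ) (hfin : ∀ r : ℝ, 0 < r → Nplus ν r < ⊤)
    {b : ℝ≥0∞} (hb : 0 < b) : ∃ u : ℝ, 0 < u ∧ Nplus ν u ≤ b := by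
  have hlim : Tendsto (fun n : ℕ => ν (Ioi ((n : ℝ) + 1))) atTop
      (nhds (ν (⋂ n : ℕ, Ioi ((n : ℝ) + 1)))) := by
    apply tendsto_measure_iInter_atTop
    · exact fun n => measurableSet_Ioi.nullMeasurableSet
    · intro m n hmn
      apply Ioi_subset_Ioi
      have : (m : ℝ) ≤ n := by exact_mod_cast hmn
      linarith
    · exact ⟨0, (hfin _ (by norm_num)).ne⟩
  have hempty : (⋂ n : ℕ, Ioi ((n : ℝ) + 1)) = ∅ := by
    ext y
    simp only [mem_iInter, mem_Ioi, mem_empty_iff_false, iff_false, not_forall, not_lt]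
    obtain ⟨n, hn⟩ := exists_nat_ge y
    exact ⟨n, by linarith⟩
  rw [hempty, measure_empty] at hlim
  obtain ⟨n, hn⟩ := (hlim.eventually (gt_mem_nhds hb)).exists
  exact ⟨(n : ℝ) + 1, by positivity, hn.le⟩

/-- The substitution rule behind the theorem: for an atomless `ν`, the sublevel set of the tail
at height `b` has `ν`-measure exactly `b`. It is a half-line starting at
`y = inf {u > 0 | N⁺(u) ≤ b}`; approaching `y` from the right gives `ν (y, ∞) ≤ b`, from the left
`b ≤ ν [y, ∞)`, and the two measures agree. -/
theorem measure_Nplus_le (ν : Measure ℝ) (hatomless : ∀ x : ℝ, ν {x} = 0)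
    (hfin : ∀ r : ℝ, 0 < r → Nplus ν r < ⊤)
    (hblow : Tendsto (fun r => Nplus ν r) (nhdsWithin 0 (Ioi (0 : ℝ))) (nhds ⊤))
    {b : ℝ≥0∞} (hb : 0 < b) (hbtop : b < ⊤) :
    ν {u : ℝ | 0 < u ∧ Nplus ν u ≤ b} = b := by
  set S := {u : ℝ | 0 < u ∧ Nplus ν u ≤ b} with hS
  have hne : S.Nonempty := exists_Nplus_le ν hfin hb
  have hev : ∀ᶠ r in nhdsWithin 0 (Ioi (0 : ℝ)), b < Nplus ν r :=
    hblow.eventually (lt_mem_nhds hbtop)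
  obtain ⟨r, hr, hr0⟩ := (hev.and self_mem_nhdsWithin).exists
  have hr0 : 0 < r := hr0
  have hlow : ∀ u ∈ S, r ≤ u := by
    intro u hu
    by_contra! hlt
    exact absurd (hu.2) (not_le.mpr (hr.trans_le (Nplus_antitone ν hlt.le)))
  have hbdd : BddBelow S := ⟨r, hlow⟩
  set y := sInf S with hy
  have hry : r ≤ y := le_csInf hne hlow
  have hy0 : 0 < y := hr0.trans_le hry
  have habove : ∀ u, y < u → u ∈ S := by
    intro u hu
    obtain ⟨v, hv, hvu⟩ := exists_lt_of_csInf_lt hne hu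
    exact ⟨hy0.trans hu, (Nplus_antitone ν hvu.le).trans hv.2⟩
  have hbelow : ∀ u, 0 < u → u < y → b ≤ Nplus ν u := by
    intro u hu0 hu
    by_contra! hlt
    exact absurd (csInf_le hbdd (show u ∈ S from ⟨hu0, hlt.le⟩)) (not_le.mpr hu)
  have hIci : ν (Ici y) = ν (Ioi y) := by
    apply le_antisymm _ (measure_mono Ioi_subset_Ici_self)
    rw [← Ioi_union_left]
    exact (measure_union_le _ _).trans (by simp [hatomless])
  obtain ⟨p, hp_anti, hp_gt, hp_lim⟩ := exists_seq_strictAnti_tendsto y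
  have hupper : ν (Ioi y) ≤ b := by
    have hU : Ioi y = ⋃ n, Ioi (p n) := by
      ext u
      simp only [mem_Ioi, mem_iUnion]
      constructor
      · intro hu
        exact (hp_lim.eventually (gt_mem_nhds hu)).exists
      · rintro ⟨n, hn⟩
        exact (hp_gt n).trans hn
    have hmono : Monotone fun n => Ioi (p n) :=
      fun m n hmn => Ioi_subset_Ioi (hp_anti.antitone hmn)
    rw [hU, hmono.measure_iUnion]
    exact iSup_le fun n => (habove _ (hp_gt n)).2
  obtain ⟨q, hq_mono, hq_mem, hq_lim⟩ := exists_seq_strictMono_tendsto' hy0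
  have hlower : b ≤ ν (Ici y) := by
    have hI : Ici y = ⋂ n, Ioi (q n) := by
      ext u
      simp only [mem_Ici, mem_iInter, mem_Ioi]
      constructor
      · intro hu n
        exact (hq_mem n).2.trans_le hu
      · intro hu
        exact le_of_tendsto' hq_lim fun n => (hu n).le
    have hanti : Antitone fun n => Ioi (q n) :=
      fun m n hmn => Ioi_subset_Ioi (hq_mono.monotone hmn)
    rw [hI, hanti.measure_iInter (fun n => measurableSet_Ioi.nullMeasurableSet)
      ⟨0, (hfin _ (hq_mem 0).1).ne⟩]
    exact le_iInf fun n => hbelow _ (hq_mem n).1 (hq_mem n).2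
  apply le_antisymm
  · calc ν S ≤ ν (Ici y) := measure_mono fun u hu => csInf_le hbdd hu
      _ = ν (Ioi y) := hIci
      _ ≤ b := hupper
  · calc b ≤ ν (Ici y) := hlower
      _ = ν (Ioi y) := hIci
      _ ≤ ν S := measure_mono habove

theorem measurable_Nplus_toReal (ν : Measure ℝ) : Measurable fun u => (Nplus ν u).toReal :=
  (Nplus_antitone ν).measurable.ennreal_toReal

/-- The tail function pushes `ν` on `(0, ∞)` forward to Lebesgue measure on `(0, ∞)`. -/
theorem map_Nplus (ν : Measure ℝ) (hatomless : ∀ x : ℝ, ν {x} = 0)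
    (hfin : ∀ r : ℝ, 0 < r → Nplus ν r < ⊤)
    (hblow : Tendsto (fun r => Nplus ν r) (nhdsWithin 0 (Ioi (0 : ℝ))) (nhds ⊤)) :
    (ν.restrict (Ioi 0)).map (fun u => (Nplus ν u).toReal) = volume.restrict (Ioi (0 : ℝ)) := by
  have hm := measurable_Nplus_toReal ν
  have hpos : ∀ b : ℝ, 0 < b →
      (ν.restrict (Ioi 0)).map (fun u => (Nplus ν u).toReal) (Iic b) = ENNReal.ofReal b := by
    intro b hb
    rw [Measure.map_apply hm measurableSet_Iic, Measure.restrict_apply (hm measurableSet_Iic),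
      ← measure_Nplus_le ν hatomless hfin hblow (ENNReal.ofReal_pos.mpr hb) ENNReal.ofReal_lt_top]
    congr 1
    ext u
    simp only [mem_inter_iff, mem_preimage, mem_Iic, mem_Ioi, mem_ofPred_eq]
    rw [and_comm]
    refine and_congr_right fun hu => ?_
    rw [ENNReal.le_ofReal_iff_toReal_le (hfin u hu).ne hb.le]
  have hall : ∀ b : ℝ,
      (ν.restrict (Ioi 0)).map (fun u => (Nplus ν u).toReal) (Iic b) = ENNReal.ofReal b := by
    intro b
    rcases lt_or_ge 0 b with hb | hb
    · exact hpos b hb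
    · rw [ENNReal.ofReal_of_nonpos hb, ← nonpos_iff_eq_zero]
      refine ENNReal.le_of_forall_pos_le_add fun δ hδ _ => ?_
      rw [zero_add, ← ENNReal.ofReal_coe_nnreal, ← hpos δ (by exact_mod_cast hδ)]
      exact measure_mono (Iic_subset_Iic.mpr (hb.trans δ.2))
  symm
  apply Measure.ext_of_Ioc
  intro a b hab
  have hdiff : Ioc a b = Iic b \ Iic a := by
    ext u
    simp [and_comm]
  rw [hdiff, measure_sdiff (Iic_subset_Iic.mpr hab.le) measurableSet_Iic.nullMeasurableSet,
    measure_sdiff (Iic_subset_Iic.mpr hab.le) measurableSet_Iic.nullMeasurableSet, hall, hall]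
  · simp [Measure.restrict_apply, Iic_inter_Ioi]
  · simp [hall]
  · simp [Measure.restrict_apply, Iic_inter_Ioi]

/-- The integrand of `jumpCDF` as a function of the value `s` of the tail. -/
def cutDensity (t h ε s : ℝ) : ℝ≥0∞ :=
  min (ENNReal.ofReal (1 / h) * (ENNReal.ofReal s) ^ (-(1 / ε))) (ENNReal.ofReal t)

theorem lintegral_cut_eq (ν : Measure ℝ) (t h ε : ℝ) (hatomless : ∀ x : ℝ, ν {x} = 0)
    (hfin : ∀ r : ℝ, 0 < r → Nplus ν r < ⊤)
    (hblow : Tendsto (fun r => Nplus ν r) (nhdsWithin 0 (Ioi (0 : ℝ))) (nhds ⊤))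
    {x : ℝ} (hx : 0 < x) :
    ∫⁻ u in Ioc (0 : ℝ) x,
      min (ENNReal.ofReal (1 / h) * (Nplus ν u) ^ (-(1 / ε))) (ENNReal.ofReal t) ∂ν =
    ∫⁻ s in Ioi (Nplus ν x).toReal, cutDensity t h ε s := by
  have hm := measurable_Nplus_toReal ν
  have hmap := map_Nplus ν hatomless hfin hblow
  set n : ℝ → ℝ := fun u => (Nplus ν u).toReal with hn
  have hG : Measurable (cutDensity t h ε) := by
    unfold cutDensity
    fun_prop
  have hleft : ∫⁻ u in Ioc (0 : ℝ) x,
      min (ENNReal.ofReal (1 / h) * (Nplus ν u) ^ (-(1 / ε))) (ENNReal.ofReal t) ∂ν =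
      ∫⁻ u in Ioc (0 : ℝ) x, cutDensity t h ε (n u) ∂ν := by
    refine setLIntegral_congr_fun measurableSet_Ioc fun u hu => ?_
    simp only [cutDensity, hn, ENNReal.ofReal_toReal (hfin u hu.1).ne]
  have hlevel : ν (n ⁻¹' {n x} ∩ Ioi 0) = 0 := by
    rw [← Measure.restrict_apply (hm (measurableSet_singleton _)),
      ← Measure.map_apply hm (measurableSet_singleton _), hmap]
    simp
  -- Points beyond `x` at which the tail is still `N⁺(x)` form a null set.
  have hset : (Ioc (0 : ℝ) x : Set ℝ) =ᵐ[ν] (n ⁻¹' Ici (n x) ∩ Ioi 0 : Set ℝ) := by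
    refine EventuallyLE.antisymm (LE.le.eventuallyLE ?_) ?_
    rotate_left
    · rw [ae_le_set]
      refine measure_mono_null ?_ hlevel
      rintro u ⟨⟨hu1, hu2⟩, hu3⟩
      have hu0 : 0 < u := hu2
      have hxu : x ≤ u := by
        by_contra! hlt
        exact hu3 ⟨hu0, hlt.le⟩
      exact ⟨le_antisymm (ENNReal.toReal_mono (hfin x hx).ne (Nplus_antitone ν hxu)) hu1, hu2⟩
    · rintro u ⟨hu0, hux⟩
      exact ⟨ENNReal.toReal_mono (hfin u hu0).ne (Nplus_antitone ν hux), hu0⟩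
  rw [hleft, setLIntegral_congr hset, ← Measure.restrict_restrict (hm measurableSet_Ici),
    ← setLIntegral_map measurableSet_Ici hG hm, hmap,
    Measure.restrict_restrict measurableSet_Ici]
  refine setLIntegral_congr ?_
  have hnx : 0 ≤ n x := ENNReal.toReal_nonneg
  have h1 : (Ici (n x) : Set ℝ) =ᵐ[volume] Ioi (n x) := Ioi_ae_eq_Ici.symm
  refine (h1.inter (ae_eq_refl _)).trans ?_
  rw [Ioi_inter_Ioi, max_eq_left hnx]
  exact ae_eq_refl _

/-- Above the threshold `(th)^{-ε}` the cut at `t` is inactive and the integrand is a pure power. -/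
theorem lintegral_cutDensity_tail {t h ε c : ℝ} (ht : 0 < t) (hh : 0 < h)
    (hε : ε ∈ Ioo (0 : ℝ) 1) (hc : (t * h) ^ (-ε) ≤ c) :
    ∫⁻ s in Ioi c, cutDensity t h ε s =
      ENNReal.ofReal (1 / h * (ε / (1 - ε)) * c ^ ((ε - 1) / ε)) := by
  obtain ⟨hε0, hε1⟩ := hε
  have hth : 0 < t * h := mul_pos ht hh
  have ha : 0 < (t * h) ^ (-ε) := Real.rpow_pos_of_pos hth _
  have hc0 : 0 < c := ha.trans_le hc
  have hexp : -(1 / ε) < -1 := by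
    rw [neg_lt_neg_iff, lt_div_iff₀ hε0]; linarith
  have hint := (integrableOn_Ioi_rpow_of_lt hexp hc0).const_mul (1 / h)
  have hstep : ∫⁻ s in Ioi c, cutDensity t h ε s =
      ∫⁻ s in Ioi c, ENNReal.ofReal (1 / h * s ^ (-(1 / ε))) := by
    refine setLIntegral_congr_fun measurableSet_Ioi fun s hs => ?_
    have hs : c < s := hs
    have hs0 : 0 < s := hc0.trans hs
    simp only [cutDensity]
    rw [ENNReal.ofReal_rpow_of_pos hs0, ← ENNReal.ofReal_mul (by positivity)]
    apply min_eq_left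
    apply ENNReal.ofReal_le_ofReal
    have h1 : s ^ (-(1 / ε)) ≤ ((t * h) ^ (-ε)) ^ (-(1 / ε)) :=
      Real.rpow_le_rpow_of_nonpos ha (hc.trans hs.le) (by linarith)
    rw [← Real.rpow_mul hth.le, show -ε * -(1 / ε) = 1 by field_simp, Real.rpow_one] at h1
    calc 1 / h * s ^ (-(1 / ε)) ≤ 1 / h * (t * h) := by gcongr
      _ = t := by field_simp
  rw [hstep, ← ofReal_integral_eq_lintegral_ofReal hint, integral_const_mul,
    integral_Ioi_rpow_of_lt hexp hc0]
  · congr 1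
    have : -(1 / ε) + 1 = (ε - 1) / ε := by field_simp; ring
    rw [this, mul_assoc]
    congr 1
    have h2 : ε - 1 ≠ 0 := by linarith
    have h3 : 1 - ε ≠ 0 := by linarith
    field_simp
    ring
  · refine (ae_restrict_iff' measurableSet_Ioi).mpr (ae_of_all _ fun s hs => ?_)
    have hs0 : 0 < s := hc0.trans hs
    change 0 ≤ 1 / h * s ^ (-(1 / ε))
    positivity

/-- Below the threshold the integrand is the constant `t`. -/
theorem lintegral_cutDensity_cut {t h ε c : ℝ} (ht : 0 < t) (hh : 0 < h)
    (hε : ε ∈ Ioo (0 : ℝ) 1) (hc0 : 0 ≤ c) :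
    ∫⁻ s in Ioc c ((t * h) ^ (-ε)), cutDensity t h ε s =
      ENNReal.ofReal (t * ((t * h) ^ (-ε) - c)) := by
  obtain ⟨hε0, hε1⟩ := hε
  have hth : 0 < t * h := mul_pos ht hh
  have hstep : ∫⁻ s in Ioc c ((t * h) ^ (-ε)), cutDensity t h ε s =
      ∫⁻ _ in Ioc c ((t * h) ^ (-ε)), ENNReal.ofReal t := by
    refine setLIntegral_congr_fun measurableSet_Ioc fun s hs => ?_
    have hs0 : 0 < s := hc0.trans_lt hs.1
    simp only [cutDensity]
    rw [ENNReal.ofReal_rpow_of_pos hs0, ← ENNReal.ofReal_mul (by positivity)]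
    apply min_eq_right
    apply ENNReal.ofReal_le_ofReal
    have h1 : ((t * h) ^ (-ε)) ^ (-(1 / ε)) ≤ s ^ (-(1 / ε)) :=
      Real.rpow_le_rpow_of_nonpos hs0 hs.2 (by
        have : 0 < 1 / ε := by positivity
        linarith)
    rw [← Real.rpow_mul hth.le, show -ε * -(1 / ε) = 1 by field_simp, Real.rpow_one] at h1
    calc t = 1 / h * (t * h) := by field_simp
      _ ≤ 1 / h * s ^ (-(1 / ε)) := by gcongr
  rw [hstep, setLIntegral_const, Real.volume_Ioc, ← ENNReal.ofReal_mul ht.le]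

/-- Explicit formulas for the large-jump distribution function:
`F(x) = (1/(th))^{1−ε} ε (N⁺(x))^{(ε−1)/ε}` when `N⁺(x) ≥ (th)^{−ε}`, and
`F(x) = 1 − (1−ε)(th)^ε N⁺(x)` when `N⁺(x) < (th)^{−ε}`. -/
theorem stmt12
    (ν : Measure ℝ) (t h ε : ℝ)
    (hsupp : ν (Iic (0 : ℝ)) = 0)
    (hatomless : ∀ x : ℝ, ν {x} = 0)
    (hfin : ∀ r : ℝ, 0 < r → Nplus ν r < ⊤)
    (hblow : Tendsto (fun r => Nplus ν r) (nhdsWithin 0 (Ioi (0 : ℝ))) (nhds ⊤))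
    (ht : 0 < t) (hh : 0 < h) (hε : ε ∈ Ioo (0 : ℝ) 1) :
    ∀ x : ℝ, 0 < x →
      (ENNReal.ofReal ((t * h) ^ (-ε)) ≤ Nplus ν x →
        jumpCDF ν t h ε x =
          ENNReal.ofReal ((1 / (t * h)) ^ (1 - ε) * ε) * (Nplus ν x) ^ ((ε - 1) / ε)) ∧
      (Nplus ν x < ENNReal.ofReal ((t * h) ^ (-ε)) →
        jumpCDF ν t h ε x =
          1 - ENNReal.ofReal ((1 - ε) * (t * h) ^ ε) * Nplus ν x) := by
  intro x hx
  obtain ⟨hε0, hε1⟩ := hε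
  have hth : 0 < t * h := mul_pos ht hh
  have h1ε : 0 < 1 - ε := by linarith
  set a : ℝ := (t * h) ^ (-ε) with ha_def
  have ha : 0 < a := Real.rpow_pos_of_pos hth _
  have hNfin := (hfin x hx).ne
  have hlam : 0 < t ^ (1 - ε) * h ^ (-ε) / (1 - ε) := by positivity
  -- `λ⁻¹` written as a single real factor.
  have hlam_inv : (t ^ (1 - ε) * h ^ (-ε) / (1 - ε))⁻¹ =
      (1 - ε) * ((t * h) ^ (ε - 1) * h) := by
    have e1 : t ^ (1 - ε) * h ^ (-ε) = (t * h) ^ (1 - ε) / h := by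
      rw [Real.mul_rpow ht.le hh.le, mul_div_assoc, ← Real.rpow_sub_one hh.ne']
      congr 2
      ring
    rw [e1, show ε - 1 = -(1 - ε) by ring, Real.rpow_neg hth.le]
    have : 0 < (t * h) ^ (1 - ε) := by positivity
    field_simp
  unfold jumpCDF
  rw [lintegral_cut_eq ν t h ε hatomless hfin hblow hx, ← ENNReal.ofReal_inv_of_pos hlam, hlam_inv]
  set c : ℝ := (Nplus ν x).toReal with hc_def
  have hc0 : 0 ≤ c := ENNReal.toReal_nonneg
  have hNc : Nplus ν x = ENNReal.ofReal c := (ENNReal.ofReal_toReal hNfin).symm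
  rw [hNc]
  refine ⟨fun hle => ?_, fun hlt => ?_⟩
  · have hac : a ≤ c := (ENNReal.ofReal_le_ofReal_iff hc0).mp hle
    have hcpos : 0 < c := ha.trans_le hac
    rw [lintegral_cutDensity_tail ht hh ⟨hε0, hε1⟩ hac, ENNReal.ofReal_rpow_of_pos hcpos,
      ← ENNReal.ofReal_mul (by positivity), ← ENNReal.ofReal_mul (by positivity)]
    congr 1
    rw [one_div (t * h), Real.inv_rpow hth.le, ← Real.rpow_neg hth.le,
      show -(1 - ε) = ε - 1 by ring]
    field_simp
  · have hca : c < a := (ENNReal.ofReal_lt_ofReal_iff ha).mp hlt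
    rw [← Ioc_union_Ioi_eq_Ioi hca.le, lintegral_union measurableSet_Ioi
      (Ioc_disjoint_Ioi le_rfl), lintegral_cutDensity_cut ht hh ⟨hε0, hε1⟩ hc0,
      lintegral_cutDensity_tail ht hh ⟨hε0, hε1⟩ le_rfl,
      ← ENNReal.ofReal_add (mul_nonneg ht.le (sub_nonneg.mpr hca.le)) (by positivity),
      ← ENNReal.ofReal_mul (by positivity), ← ENNReal.ofReal_mul (by positivity),
      ← ENNReal.ofReal_one, ← ENNReal.ofReal_sub _ (by positivity)]
    congr 1
    -- Everything reduces to powers of `p = (th)^ε`.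
    have hp : 0 < (t * h) ^ ε := by positivity
    have e1 : ((t * h) ^ (-ε)) ^ ((ε - 1) / ε) = (t * h) / (t * h) ^ ε := by
      rw [← Real.rpow_mul hth.le, show -ε * ((ε - 1) / ε) = 1 - ε by field_simp; ring,
        Real.rpow_sub hth, Real.rpow_one]
    have e2 : (t * h) ^ (ε - 1) = (t * h) ^ ε / (t * h) := Real.rpow_sub_one hth.ne' _
    rw [e1, e2, ha_def, Real.rpow_neg hth.le]
    set p := (t * h) ^ ε
    field_simp
    ring
end
end
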